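/- Let λ : G → A be a group homomorphism. (1) If f : M² → A is a G-invariant A-multilinear map, then ((f ⊗ id_A) ∘ ψ_{2,λ} ∘ γ₂)((m₁,g₁),(m₂,g₂)) = f(m₁ − m₂, m₂ − m₂·(φ(g₂)g₂⁻¹)) ⊗ λ(g₁) for all m₁,m₂ ∈ M and g₁,g₂ ∈ G. (2) If f : M³ → A is a G-invariant A-multilinear map, then ((f ⊗ id_A) ∘ ψ_{3,λ} ∘ γ₃)((m₁,g₁),(m₂,g₂),(m₃,g₃)) = f((m₁−m₂) − (m₁−m₂)·(φ(g₂)⁻¹g₂), m₂ − m₃, m₃ − m₃·(φ(g₃)g₃⁻¹)) ⊗ λ(g₁) for all m₁,m₂,m₃ ∈ M and g₁,g₂,g₃ ∈ G. (These are the values of the 2- and 3-cocycles Φ_{f,λ} of the G-Alexander multiple conjugation biquandle on the generators all of whose blocks are singletons.) -/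

import Mathlib

open FreeAbelianGroup
open scoped TensorProduct

namespace GAlex

variable {G M A : Type*} [Group G] [AddCommGroup M] [DistribMulAction Gᵐᵒᵖ M] [AddCommGroup A]

/-- The right action `m · g` of a group element `g : G` on `m : M`
(coming from the right `ℤ[G]`-module structure on `M`). -/
def ract (m : M) (g : G) : M := MulOpposite.op g • m

variable (φ : G →* G)

/-- The operation `(m,g) ⊳ (n,h) = (mh + n(φ(h) − h), h⁻¹gh)` of the `G`-Alexander biquandle. -/
def under (x y : M × G) : M × G :=
  (ract x.1 y.2 + ract y.1 (φ y.2) - ract y.1 y.2, y.2⁻¹ * x.2 * y.2)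

/-- The operation `(m,g) ⊚ (n,h) = (mφ(h), g)` of the `G`-Alexander biquandle. -/
def _root_.GAlex.over (x y : M × G) : M × G := (ract x.1 (φ y.2), x.2)

/-- The face `g_{⟨p⟩}` (delete the `p`-th entry). -/
def dGdel (n : ℕ) (p : Fin (n + 1)) (g : Fin (n + 1) → G) : Fin n → G :=
  fun j => g (p.succAbove j)

/-- The face `g_{⟨⊲p⟩}` (conjugate the first entries by `g p` and delete the `p`-th entry). -/
def dGconj (n : ℕ) (p : Fin (n + 1)) (g : Fin (n + 1) → G) : Fin n → G :=
  fun j => if (j : ℕ) < (p : ℕ) then (g p)⁻¹ * g j.castSucc * g p else g j.succ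

/-- The face `m_{⟨p⟩}` (merge the two entries adjacent to position `p`;
for `p = 0` drop the first entry). -/
def dMmer (n : ℕ) (p : Fin (n + 1)) (m : Fin (n + 1) → M) : Fin n → M :=
  fun j =>
    if (j : ℕ) + 1 < (p : ℕ) then m j.castSucc
    else if (j : ℕ) + 1 = (p : ℕ) then m j.castSucc + m j.succ
    else m j.succ

/-- The face `m_{⟨⊲p⟩}`. -/
def dMconj (n : ℕ) (p : Fin (n + 1)) (g : Fin (n + 1) → G) (m : Fin (n + 1) → M) : Fin n → M :=
  fun j =>
    if (j : ℕ) + 1 < (p : ℕ) then ract (m j.castSucc) (g p)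
    else if (j : ℕ) + 1 = (p : ℕ) then ract (m j.castSucc) (g p) + ract (m j.succ) (φ (g p))
    else ract (m j.succ) (φ (g p))

/-- The boundary map `∂^{BR_U}_{n+1} : C^{BR_U}_{n+1}(X;ℤ) → C^{BR_U}_n(X;ℤ)`
(the boundary `∂^{BR_U}_k` is `0` for `k ≤ 1`, which agrees with this formula at `n = 0`). -/
def dBRU (n : ℕ) :
    FreeAbelianGroup ((Fin (n + 1) → G) × (Fin (n + 1) → M)) →+
      FreeAbelianGroup ((Fin n → G) × (Fin n → M)) :=
  FreeAbelianGroup.lift fun x =>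
    ∑ p : Fin (n + 1),
      (-1 : ℤ) ^ (p : ℕ) •
        (FreeAbelianGroup.of (dGdel n p x.1, dMmer n p x.2) -
          FreeAbelianGroup.of (dGconj n p x.1, dMconj φ n p x.1 x.2))

/-- The birack boundary map `∂^{BR}_{n+1} : C^{BR}_{n+1}(X;ℤ) → C^{BR}_n(X;ℤ)`
for the `G`-Alexander biquandle `X = M × G` (with trivial `X`-set). -/
def dBR (n : ℕ) :
    FreeAbelianGroup (Fin (n + 1) → M × G) →+ FreeAbelianGroup (Fin n → M × G) :=
  FreeAbelianGroup.lift fun x =>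
    ∑ p : Fin (n + 1),
      (-1 : ℤ) ^ (p : ℕ) •
        (FreeAbelianGroup.of (fun j => x (p.succAbove j)) -
          FreeAbelianGroup.of (fun j : Fin n =>
            if (j : ℕ) < (p : ℕ) then under φ (x j.castSucc) (x p)
            else GAlex.over φ (x j.succ) (x p)))

/-- `γ_n((m₁,g₁),…,(m_n,g_n)) = (g₁,…,g_n; m₁−m₂, …, m_{n−1}−m_n, m_n)`. -/
def gammaMap (n : ℕ) :
    FreeAbelianGroup (Fin n → M × G) →+ FreeAbelianGroup ((Fin n → G) × (Fin n → M)) :=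
  FreeAbelianGroup.lift fun x =>
    FreeAbelianGroup.of
      (fun j => (x j).2,
       fun j => (x j).1 - if h : (j : ℕ) + 1 < n then (x ⟨(j : ℕ) + 1, h⟩).1 else 0)

/-- `r_n(g₁,…,g_n; m₁,…,m_n) = ((m₁+⋯+m_n, g₁), (m₂+⋯+m_n, g₂), …, (m_n, g_n))`. -/
def rMap (n : ℕ) :
    FreeAbelianGroup ((Fin n → G) × (Fin n → M)) →+ FreeAbelianGroup (Fin n → M × G) :=
  FreeAbelianGroup.lift fun p =>
    FreeAbelianGroup.of fun j => ((∑ i ∈ Finset.Ici j, p.2 i), p.1 j)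

/-- The boundary map `∂^{BR_U}_{d+1}` of `C^{BR_U}_*(X;ℤ)_X` (the version with `X`-set `X`,
whose degree-`d` chain group is free on `(1+d)`-tuples); it is `0` in degrees `≤ 1`. -/
def dBRUX : (d : ℕ) →
    FreeAbelianGroup ((Fin (d + 2) → G) × (Fin (d + 2) → M)) →+
      FreeAbelianGroup ((Fin (d + 1) → G) × (Fin (d + 1) → M))
  | 0 => 0
  | d + 1 =>
    FreeAbelianGroup.lift fun x =>
      ∑ i : Fin (d + 2),
        (-1 : ℤ) ^ (i : ℕ) •
          (FreeAbelianGroup.of (dGdel (d + 2) i.succ x.1, dMmer (d + 2) i.succ x.2) -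
            FreeAbelianGroup.of (dGconj (d + 2) i.succ x.1, dMconj φ (d + 2) i.succ x.1 x.2))

/-- The boundary map `∂^{BR}_{d+1}` of `C^{BR}_*(X;ℤ)_X` (the version with `X`-set `X`);
it is `0` in degrees `≤ 1`. -/
def dBRX : (d : ℕ) →
    FreeAbelianGroup (Fin (d + 2) → M × G) →+ FreeAbelianGroup (Fin (d + 1) → M × G)
  | 0 => 0
  | d + 1 =>
    FreeAbelianGroup.lift fun x =>
      ∑ i : Fin (d + 2),
        (-1 : ℤ) ^ (i : ℕ) •
          (FreeAbelianGroup.of (fun j => x (i.succ.succAbove j)) -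
            FreeAbelianGroup.of (fun j : Fin (d + 2) =>
              if (j : ℕ) < (i : ℕ) + 1 then under φ (x j.castSucc) (x i.succ)
              else GAlex.over φ (x j.succ) (x i.succ)))


/-- The subgroup of `G`-coinvariants relations in `C^{gp}_n(M;ℤ)`:
generated by all `(m₁g,…,m_ng) − (m₁,…,m_n)`. -/
def coinvSub (n : ℕ) : AddSubgroup (FreeAbelianGroup (Fin n → M)) :=
  AddSubgroup.closure
    {z | ∃ (m : Fin n → M) (g : G),
        z = FreeAbelianGroup.of (fun i => ract (m i) g) - FreeAbelianGroup.of m}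

/-- The coinvariant group chain group `C^{gp}_n(M;ℤ)_G`. -/
abbrev CgpG (n : ℕ) : Type _ :=
  FreeAbelianGroup (Fin n → M) ⧸ coinvSub (G := G) (M := M) n

/-- The group-homology boundary map `∂^{gp}_{n+1} : C^{gp}_{n+1}(M;ℤ) → C^{gp}_n(M;ℤ)`
(it is `0` in degrees `≤ 1`, which agrees with this formula at `n = 0`). -/
def dgp (n : ℕ) :
    FreeAbelianGroup (Fin (n + 1) → M) →+ FreeAbelianGroup (Fin n → M) :=
  FreeAbelianGroup.lift fun m =>
    (∑ p : Fin (n + 1), (-1 : ℤ) ^ (p : ℕ) • FreeAbelianGroup.of (dMmer n p m)) +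
      (-1 : ℤ) ^ (n + 1) • FreeAbelianGroup.of fun j : Fin n => m j.castSucc

/-- `|k| = k₁ + ⋯ + k_n`. -/
def wt {n : ℕ} (k : Fin n → Bool) : ℕ := ∑ i, if k i then 1 else 0

/-- `g_{k,i} = φ(g₀^{k₀} ⋯ g_i^{k_i}) · g_{i+1}^{k_{i+1}} ⋯ g_{n-1}^{k_{n-1}}`
(indices written `0`-based; the products are ordered). -/
def gki {n : ℕ} (g : Fin n → G) (k : Fin n → Bool) (i : Fin n) : G :=
  φ ((((List.finRange n).filter fun j => decide (j ≤ i)).map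
        fun j => if k j then g j else 1).prod) *
    (((List.finRange n).filter fun j => decide (i < j)).map
        fun j => if k j then g j else 1).prod

/-- The value of `ψ` on a generator:
`Σ_{k, k₀ = 0} (−1)^{|k|} (m₀ g_{k,0}, …, m_n g_{k,n})`, as an element of the free
abelian group (before passing to coinvariants). -/
def psiVal (n : ℕ) (x : (Fin (n + 1) → G) × (Fin (n + 1) → M)) :
    FreeAbelianGroup (Fin (n + 1) → M) :=
  ∑ k ∈ Finset.univ.filter fun k : Fin (n + 1) → Bool => k 0 = false,
    (-1 : ℤ) ^ wt k • FreeAbelianGroup.of fun i => ract (x.2 i) (gki φ x.1 k i)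

/-- `ψ` as a homomorphism into the free abelian group (before coinvariants). -/
def psiFree (n : ℕ) :
    FreeAbelianGroup ((Fin (n + 1) → G) × (Fin (n + 1) → M)) →+
      FreeAbelianGroup (Fin (n + 1) → M) :=
  FreeAbelianGroup.lift (psiVal φ n)

/-- The homomorphism `ψ : C^{BR_U} → C^{gp}(M;ℤ)_G`. -/
def psiG (n : ℕ) :
    FreeAbelianGroup ((Fin (n + 1) → G) × (Fin (n + 1) → M)) →+
      CgpG (G := G) (M := M) (n + 1) :=
  (QuotientAddGroup.mk' (coinvSub (G := G) (M := M) (n + 1))).comp (psiFree φ n)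

/-- The homomorphism `ψ_{•,λ}`, sending a generator `x` to `ψ(x) ⊗ λ(x₁)` where `x₁` is the
first `G`-entry of `x`. -/
noncomputable def psiLam (lam : G → A) (n : ℕ) :
    FreeAbelianGroup ((Fin (n + 1) → G) × (Fin (n + 1) → M)) →+
      TensorProduct ℤ (CgpG (G := G) (M := M) (n + 1)) A :=
  FreeAbelianGroup.lift fun x =>
    (QuotientAddGroup.mk' (coinvSub (G := G) (M := M) (n + 1)) (psiVal φ n x)) ⊗ₜ[ℤ]
      lam (x.1 0)

/-- `D^{gp}_n(M;ℤ)_G`: the image in the coinvariants of the subgroup generated by tuples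
with a vanishing entry in a position `1 ≤ i ≤ n−1`. -/
def DgpGsub (n : ℕ) : AddSubgroup (CgpG (G := G) (M := M) n) :=
  (AddSubgroup.closure
      {z : FreeAbelianGroup (Fin n → M) |
        ∃ (m : Fin n → M) (i : Fin n),
          (i : ℕ) + 1 < n ∧ m i = 0 ∧ z = FreeAbelianGroup.of m}).map
    (QuotientAddGroup.mk' (coinvSub (G := G) (M := M) n))

/-!
Put `θ(g) = φ(g)⁻¹g`, an endomorphism of `G` because `φ` has central values. Then
`g_{k,i} = θ(g_{i+1}^{k_{i+1}} ⋯ g_n^{k_n}) · φ(g₁^{k₁} ⋯ g_n^{k_n})`, and since the second factor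
does not depend on `i`, a `G`-invariant `f` does not see it. For `n = 2` this leaves
`f(a, b) - f(aθ(g₂), b)`; for `n = 3`, additivity in the first slot leaves
`f(a', b, c) - f(a'θ(g₃), bθ(g₃), c)` with `a' = a - aθ(g₂)`. In both cases invariance moves the
twist by the last group entry to `θ(g_n)⁻¹ = φ(g_n)g_n⁻¹` in the last slot.
-/

theorem ract_one (m : M) : ract m (1 : G) = m := by
  simp [ract]

theorem ract_mul (m : M) (g h : G) : ract m (g * h) = ract (ract m g) h := by
  simp [ract, mul_smul]

omit [Group G] [DistribMulAction Gᵐᵒᵖ M] in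
theorem gammaMap_two_of (m₁ m₂ : M) (g₁ g₂ : G) :
    gammaMap 2 (of ![(m₁, g₁), (m₂, g₂)]) = of (![g₁, g₂], ![m₁ - m₂, m₂]) := by
  rw [gammaMap, lift_apply_of]
  congr 2 <;> ext i <;> fin_cases i <;> simp

omit [Group G] [DistribMulAction Gᵐᵒᵖ M] in
theorem gammaMap_three_of (m₁ m₂ m₃ : M) (g₁ g₂ g₃ : G) :
    gammaMap 3 (of ![(m₁, g₁), (m₂, g₂), (m₃, g₃)]) =
      of (![g₁, g₂, g₃], ![m₁ - m₂, m₂ - m₃, m₃]) := by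
  rw [gammaMap, lift_apply_of]
  congr 2 <;> ext i <;> fin_cases i <;> simp

theorem wt_cons {n : ℕ} (b : Bool) (k : Fin n → Bool) :
    wt (Matrix.vecCons b k) = (if b then 1 else 0) + wt k :=
  Fin.sum_univ_succ _

theorem wt_empty (k : Fin 0 → Bool) : wt k = 0 := rfl

section CentralValues

variable {φ} (hφ : ∀ g : G, φ g ∈ Subgroup.center G)

/-- The homomorphism `g ↦ φ(g)⁻¹g`, which compares the action of `g` on `M` with the action of the
central element `φ(g)`. It is multiplicative because `φ` has central values. -/
def twist : G →* G :=
  MonoidHom.mk' (fun g => (φ g)⁻¹ * g) fun g h => by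
    have hcomm : (φ g)⁻¹ * g * (φ h)⁻¹ = (φ h)⁻¹ * ((φ g)⁻¹ * g) :=
      Subgroup.mem_center_iff.mp (inv_mem (hφ h)) _
    calc (φ (g * h))⁻¹ * (g * h)
        = (φ h)⁻¹ * ((φ g)⁻¹ * g) * h := by simp only [map_mul, mul_inv_rev, mul_assoc]
      _ = (φ g)⁻¹ * g * ((φ h)⁻¹ * h) := by rw [← hcomm, mul_assoc]

theorem twist_apply (g : G) : twist hφ g = (φ g)⁻¹ * g := rfl

theorem inv_twist_apply (g : G) : (twist hφ g)⁻¹ = φ g * g⁻¹ := by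
  rw [twist_apply, mul_inv_rev, inv_inv, Subgroup.mem_center_iff.mp (hφ g)]

include hφ in
theorem map_prod_eq_of_perm {l l' : List G} (h : l.Perm l') : φ l.prod = φ l'.prod := by
  rw [map_list_prod, map_list_prod]
  refine (h.map φ).prod_eq' (List.pairwise_map.mpr (List.pairwise_of_forall fun x y => ?_))
  exact (Subgroup.mem_center_iff.mp (hφ x) (φ y)).symm

/-- The ordered product of the powers `g_j^{k_j}` over the indices `j` listed in `l`. -/
def powProd {n : ℕ} (g : Fin n → G) (k : Fin n → Bool) (l : List (Fin n)) : G :=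
  (l.map fun j => if k j then g j else 1).prod

theorem gki_eq_twist_mul {n : ℕ} (g : Fin n → G) (k : Fin n → Bool) (i : Fin n) :
    gki φ g k i =
      twist hφ (powProd g k ((List.finRange n).filter fun j => decide (i < j))) *
        φ (powProd g k (List.finRange n)) := by
  set head := (List.finRange n).filter fun j => decide (j ≤ i) with h_head
  set tail := (List.finRange n).filter fun j => decide (i < j) with h_tail
  have hperm : (tail ++ head).Perm (List.finRange n) := by
    simpa only [h_head, h_tail, ← not_lt, decide_not] using
      List.filter_append_perm (fun j => decide (i < j)) (List.finRange n)
  have hall : φ (powProd g k (List.finRange n)) =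
      φ (powProd g k tail) * φ (powProd g k head) := by
    rw [← map_mul, powProd, powProd, powProd, ← List.prod_append, ← List.map_append]
    exact (map_prod_eq_of_perm hφ (hperm.map _)).symm
  calc gki φ g k i = φ (powProd g k head) * powProd g k tail := rfl
    _ = powProd g k tail * φ (powProd g k head) :=
      (Subgroup.mem_center_iff.mp (hφ _) _).symm
    _ = twist hφ (powProd g k tail) * φ (powProd g k (List.finRange n)) := by
      rw [hall, ← mul_assoc, Subgroup.mem_center_iff.mp (hφ _) (twist hφ _), twist_apply,
        mul_inv_cancel_left]

theorem lift_psiVal_of_invariant {n : ℕ} {F : (Fin (n + 1) → M) → A}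
    (hF : ∀ (v : Fin (n + 1) → M) (c : G), F (fun i => ract (v i) c) = F v)
    (g : Fin (n + 1) → G) (m : Fin (n + 1) → M) :
    lift F (psiVal φ n (g, m)) =
      ∑ k with k 0 = false, (-1 : ℤ) ^ wt k •
        F fun i => ract (m i) (twist hφ (powProd g k
          ((List.finRange (n + 1)).filter fun j => decide (i < j)))) := by
  simp only [psiVal, map_sum, map_zsmul, lift_apply_of, gki_eq_twist_mul hφ, ract_mul, hF]

theorem lift_psiVal_one_of_invariant {f : M → M → A}
    (hf : ∀ (m n : M) (c : G), f (ract m c) (ract n c) = f m n)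
    (g₁ g₂ : G) (a b : M) :
    lift (fun v => f (v 0) (v 1)) (psiVal φ 1 (![g₁, g₂], ![a, b])) =
      f a b - f (ract a (twist hφ g₂)) b := by
  have hk : (Finset.univ.filter fun k : Fin 2 → Bool => k 0 = false) =
      {![false, false], ![false, true]} := by decide
  rw [lift_psiVal_of_invariant hφ fun v => hf _ _, hk, Finset.sum_pair (by decide)]
  simp [wt_cons, wt_empty, powProd, List.finRange_succ, ract_one, sub_eq_add_neg]

theorem lift_psiVal_two_of_invariant {f : M → M → M → A}
    (hf : ∀ (m n p : M) (c : G), f (ract m c) (ract n c) (ract p c) = f m n p)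
    (g₁ g₂ g₃ : G) (a b c : M) :
    lift (fun v => f (v 0) (v 1) (v 2)) (psiVal φ 2 (![g₁, g₂, g₃], ![a, b, c])) =
      f a b c - f (ract a (twist hφ g₂)) b c -
        (f (ract a (twist hφ g₃)) (ract b (twist hφ g₃)) c -
          f (ract (ract a (twist hφ g₂)) (twist hφ g₃)) (ract b (twist hφ g₃)) c) := by
  have hk : (Finset.univ.filter fun k : Fin 3 → Bool => k 0 = false) =
      {![false, false, false], ![false, true, false], ![false, false, true],
        ![false, true, true]} := by decide
  rw [lift_psiVal_of_invariant hφ fun v => hf _ _ _, hk, Finset.sum_insert (by decide),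
    Finset.sum_insert (by decide), Finset.sum_pair (by decide)]
  simp [wt_cons, wt_empty, powProd, List.finRange_succ, ract_one, ract_mul, sub_eq_add_neg,
    add_assoc, add_comm]

include hφ in
theorem lift_psiVal_one_of_add_right {f : M → M → A}
    (hadd : ∀ m n n' : M, f m (n + n') = f m n + f m n')
    (hf : ∀ (m n : M) (c : G), f (ract m c) (ract n c) = f m n)
    (g₁ g₂ : G) (a b : M) :
    lift (fun v => f (v 0) (v 1)) (psiVal φ 1 (![g₁, g₂], ![a, b])) =
      f a (b - ract b (φ g₂ * g₂⁻¹)) := by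
  have hsub : f a (b - ract b (twist hφ g₂)⁻¹) = f a b - f a (ract b (twist hφ g₂)⁻¹) :=
    map_sub (AddMonoidHom.mk' (f a) (hadd a)) _ _
  have hshift : f (ract a (twist hφ g₂)) b = f a (ract b (twist hφ g₂)⁻¹) := by
    rw [← hf _ b (twist hφ g₂)⁻¹, ← ract_mul, mul_inv_cancel, ract_one]
  rw [lift_psiVal_one_of_invariant hφ hf, hshift, ← hsub, inv_twist_apply]

include hφ in
theorem lift_psiVal_two_of_add_left_of_add_right {f : M → M → M → A}
    (hleft : ∀ m m' n p : M, f (m + m') n p = f m n p + f m' n p)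
    (hright : ∀ m n p p' : M, f m n (p + p') = f m n p + f m n p')
    (hf : ∀ (m n p : M) (c : G), f (ract m c) (ract n c) (ract p c) = f m n p)
    (g₁ g₂ g₃ : G) (a b c : M) :
    lift (fun v => f (v 0) (v 1) (v 2)) (psiVal φ 2 (![g₁, g₂, g₃], ![a, b, c])) =
      f (a - ract a ((φ g₂)⁻¹ * g₂)) b (c - ract c (φ g₃ * g₃⁻¹)) := by
  have hsub_left (m m' n p : M) : f (m - m') n p = f m n p - f m' n p :=
    map_sub (AddMonoidHom.mk' (f · n p) fun m m' => hleft m m' n p) _ _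
  have hsub_right (m n p p' : M) : f m n (p - p') = f m n p - f m n p' :=
    map_sub (AddMonoidHom.mk' (f m n) (hright m n)) _ _
  have hshift (m n : M) : f (ract m (twist hφ g₃)) (ract n (twist hφ g₃)) c =
      f m n (ract c (twist hφ g₃)⁻¹) := by
    rw [← hf _ _ c (twist hφ g₃)⁻¹]
    simp only [← ract_mul, mul_inv_cancel, ract_one]
  rw [lift_psiVal_two_of_invariant hφ hf, hshift, hshift, ← hsub_left, ← hsub_left, ← hsub_right,
    inv_twist_apply, twist_apply]

end CentralValues

theorem mcb_cocycle_formulas_general {B : Type*} [AddCommGroup B]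
    (hφ : ∀ g : G, φ g ∈ Subgroup.center G) (lam : G → B) :
    (∀ f : M → M → A,
      (∀ m n n' : M, f m (n + n') = f m n + f m n') →
      (∀ (m n : M) (g : G), f (ract m g) (ract n g) = f m n) →
      ∀ (m₁ m₂ : M) (g₁ g₂ : G),
        (FreeAbelianGroup.lift fun x : (Fin 2 → G) × (Fin 2 → M) =>
            (FreeAbelianGroup.lift (fun v : Fin 2 → M => f (v 0) (v 1)) (psiVal φ 1 x))
              ⊗ₜ[ℤ] lam (x.1 0))
          (gammaMap 2 (FreeAbelianGroup.of ![(m₁, g₁), (m₂, g₂)])) =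
        f (m₁ - m₂) (m₂ - ract m₂ (φ g₂ * g₂⁻¹)) ⊗ₜ[ℤ] lam g₁) ∧
    (∀ f : M → M → M → A,
      (∀ m m' n p : M, f (m + m') n p = f m n p + f m' n p) →
      (∀ m n p p' : M, f m n (p + p') = f m n p + f m n p') →
      (∀ (m n p : M) (g : G), f (ract m g) (ract n g) (ract p g) = f m n p) →
      ∀ (m₁ m₂ m₃ : M) (g₁ g₂ g₃ : G),
        (FreeAbelianGroup.lift fun x : (Fin 3 → G) × (Fin 3 → M) =>
            (FreeAbelianGroup.lift (fun v : Fin 3 → M => f (v 0) (v 1) (v 2))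
              (psiVal φ 2 x)) ⊗ₜ[ℤ] lam (x.1 0))
          (gammaMap 3 (FreeAbelianGroup.of ![(m₁, g₁), (m₂, g₂), (m₃, g₃)])) =
        f ((m₁ - m₂) - ract (m₁ - m₂) ((φ g₂)⁻¹ * g₂)) (m₂ - m₃)
            (m₃ - ract m₃ (φ g₃ * g₃⁻¹)) ⊗ₜ[ℤ] lam g₁) := by
  refine ⟨fun f hadd hf m₁ m₂ g₁ g₂ => ?_, fun f hleft hright hf m₁ m₂ m₃ g₁ g₂ g₃ => ?_⟩
  · rw [gammaMap_two_of, lift_apply_of, lift_psiVal_one_of_add_right hφ hadd hf]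
    rfl
  · rw [gammaMap_three_of, lift_apply_of,
      lift_psiVal_two_of_add_left_of_add_right hφ hleft hright hf]
    rfl

/-- Values of the `2`- and `3`-cocycles `Φ_{f,λ}` of the `G`-Alexander
multiple conjugation biquandle on the generators all of whose blocks are singletons:
`((f ⊗ id_A) ∘ ψ_{2,λ} ∘ γ₂)((m₁,g₁),(m₂,g₂)) =
   f(m₁ − m₂, m₂ − m₂·(φ(g₂)g₂⁻¹)) ⊗ λ(g₁)` and
`((f ⊗ id_A) ∘ ψ_{3,λ} ∘ γ₃)((m₁,g₁),(m₂,g₂),(m₃,g₃)) =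
   f((m₁−m₂) − (m₁−m₂)·(φ(g₂)⁻¹g₂), m₂ − m₃, m₃ − m₃·(φ(g₃)g₃⁻¹)) ⊗ λ(g₁)`.
(The induced homomorphism `f ⊗ id_A` is expressed through representatives, so the
composite is computed by the free lift of `f` applied to `ψ^{free}`.) -/
theorem mcb_cocycle_formulas (hφ : ∀ g : G, φ g ∈ Subgroup.center G)
    (lam : G → A) (hlam : ∀ g h : G, lam (g * h) = lam g + lam h) :
    (∀ f : M → M → A,
      (∀ m m' n : M, f (m + m') n = f m n + f m' n) →
      (∀ m n n' : M, f m (n + n') = f m n + f m n') →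
      (∀ (m n : M) (g : G), f (ract m g) (ract n g) = f m n) →
      ∀ (m₁ m₂ : M) (g₁ g₂ : G),
        (FreeAbelianGroup.lift fun x : (Fin 2 → G) × (Fin 2 → M) =>
            (FreeAbelianGroup.lift (fun v : Fin 2 → M => f (v 0) (v 1)) (psiVal φ 1 x))
              ⊗ₜ[ℤ] lam (x.1 0))
          (gammaMap 2 (FreeAbelianGroup.of ![(m₁, g₁), (m₂, g₂)])) =
        f (m₁ - m₂) (m₂ - ract m₂ (φ g₂ * g₂⁻¹)) ⊗ₜ[ℤ] lam g₁) ∧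
    (∀ f : M → M → M → A,
      (∀ m m' n p : M, f (m + m') n p = f m n p + f m' n p) →
      (∀ m n n' p : M, f m (n + n') p = f m n p + f m n' p) →
      (∀ m n p p' : M, f m n (p + p') = f m n p + f m n p') →
      (∀ (m n p : M) (g : G), f (ract m g) (ract n g) (ract p g) = f m n p) →
      ∀ (m₁ m₂ m₃ : M) (g₁ g₂ g₃ : G),
        (FreeAbelianGroup.lift fun x : (Fin 3 → G) × (Fin 3 → M) =>
            (FreeAbelianGroup.lift (fun v : Fin 3 → M => f (v 0) (v 1) (v 2))
              (psiVal φ 2 x)) ⊗ₜ[ℤ] lam (x.1 0))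
          (gammaMap 3 (FreeAbelianGroup.of ![(m₁, g₁), (m₂, g₂), (m₃, g₃)])) =
        f ((m₁ - m₂) - ract (m₁ - m₂) ((φ g₂)⁻¹ * g₂)) (m₂ - m₃)
            (m₃ - ract m₃ (φ g₃ * g₃⁻¹)) ⊗ₜ[ℤ] lam g₁) :=
  ⟨fun f _ => (mcb_cocycle_formulas_general φ hφ lam).1 f,
    fun f hleft _ => (mcb_cocycle_formulas_general φ hφ lam).2 f hleft⟩

end GAlex
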